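/- The map U (the μ-a.e. limit of the Chacon-type maps U_n) is ergodic: every Borel set A ⊆ T² with U⁻¹(A) = A up to μ-null sets satisfies μ(A) = 0 or μ(A) = 1. -/

import Mathlib

/-!
The map `U` is of rank one. With `s = 2^{-n}`, the map `U_n` permutes cyclically all squares of the
dyadic grid of side `s` except the remainder `[1 - s, 1) × [0, s)`; its tower has base
`[0, s) × [1 - s, 1)` and top `[1 - 2s, 1 - s) × [0, s)`. The next map cuts this tower into four
columns and stacks them, with three quarters of the remainder as spacers. Off the top and the
remainder, `U` agrees with `U_n` (`chaconU_stable`), so it moves the levels by translations.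

If `A` is invariant, it therefore has the same mass in congruent pieces of all grid squares other
than the remainder (`mass_eq`, by induction on `n`). Hence a dyadic translation preserves `A` up to
a null set: on each pair of grid squares avoiding the remainder the mass comparison forces the
defect to be null (`null_level`), and every point avoids the remainder for large `n`
(`null_dyadic`). Dyadic translations are dense in the torus, and the action of the torus on itself
is ergodic, so `A` is null or conull.
-/

open MeasureTheory Filter Set
open scoped ENNReal symmDiff

noncomputable section

instance fact01 : Fact ((0:ℝ) < 1) := ⟨one_pos⟩

/-- The two-dimensional torus `[0,1)²` with coordinatewise addition mod 1. -/
abbrev T2 : Type := AddCircle (1:ℝ) × AddCircle (1:ℝ)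

/-- The canonical representative in `[0,1)` of a point of the circle. -/
noncomputable def rep (x : AddCircle (1:ℝ)) : ℝ := ((AddCircle.equivIco 1 0) x : ℝ)

/-- The point of the torus with coordinates `a`, `b` (mod 1). -/
noncomputable def tv (a b : ℝ) : T2 := ((a : AddCircle (1:ℝ)), (b : AddCircle (1:ℝ)))

open Classical in
/-- The Chacon-type maps `U_n` on the torus. -/
noncomputable def chaconU : ℕ → T2 → T2
  | 0 => id
  | 1 => fun x =>
      if 0 ≤ rep x.1 ∧ rep x.1 < 1/2 ∧ 1/2 ≤ rep x.2 ∧ rep x.2 < 1 then x + tv (1/2) 0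
      else if 1/2 ≤ rep x.1 ∧ rep x.1 < 1 ∧ 1/2 ≤ rep x.2 ∧ rep x.2 < 1 then
        x + tv (-(1/2)) (-(1/2))
      else if 0 ≤ rep x.1 ∧ rep x.1 < 1/2 ∧ 0 ≤ rep x.2 ∧ rep x.2 < 1/2 then x + tv 0 (1/2)
      else x
  | (n+2) => fun x =>
      let s : ℝ := 1 / 2 ^ (n+2)
      let a := rep x.1
      let b := rep x.2
      if 1-4*s ≤ a ∧ a < 1-3*s ∧ s ≤ b ∧ b < 2*s then x + tv (5*s-1) (1-2*s)
      else if 1-3*s ≤ a ∧ a < 1-2*s ∧ s ≤ b ∧ b < 2*s then x + tv s 0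
      else if 1-4*s ≤ a ∧ a < 1-3*s ∧ 0 ≤ b ∧ b < s then x + tv (3*s) s
      else if 1-3*s ≤ a ∧ a < 1-2*s ∧ 0 ≤ b ∧ b < s then x + tv s 0
      else if 1-2*s ≤ a ∧ a < 1 ∧ s ≤ b ∧ b < 2*s then x + tv (2*s-1) (1-3*s)
      else if 1-2*s ≤ a ∧ a < 1-s ∧ 0 ≤ b ∧ b < s then x + tv (2*s-1) (1-s)
      else if 1-s ≤ a ∧ a < 1 ∧ 0 ≤ b ∧ b < s then x
      else chaconU (n+1) x

/-- An automorphism of the torus: measurable, bijective up to null sets with measurable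
inverse, and measure-preserving. -/
def IsAutomorphism (U : T2 → T2) : Prop :=
  Measurable U ∧ ∃ V : T2 → T2, Measurable V ∧
    (∀ᵐ x ∂(volume : Measure T2), V (U x) = x) ∧
    (∀ᵐ x ∂(volume : Measure T2), U (V x) = x) ∧
    ∀ A : Set T2, MeasurableSet A → volume (U ⁻¹' A) = volume A


instance : (volume : Measure T2).IsAddLeftInvariant :=
  inferInstanceAs ((volume : Measure (AddCircle (1:ℝ))).prod
    (volume : Measure (AddCircle (1:ℝ)))).IsAddLeftInvariant

/-- The action of a group on itself is ergodic. This restates Mathlib's instance so that it can be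
applied to `T2` by unification; instance search alone does not find it there. -/
lemma ergodic_vadd_self {G : Type*} [AddGroup G] [MeasurableSpace G] [MeasurableAdd₂ G]
    [MeasurableNeg G] {μ : Measure G} [SFinite μ] [μ.IsAddLeftInvariant] : ErgodicVAdd G G μ :=
  inferInstance

lemma tv_add (a b c d : ℝ) : tv a b + tv c d = tv (a + c) (b + d) := by
  simp [tv]

lemma rep_nonneg (x : AddCircle (1:ℝ)) : 0 ≤ rep x :=
  ((AddCircle.equivIco 1 0) x).2.1

lemma rep_lt_one (x : AddCircle (1:ℝ)) : rep x < 1 := by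
  have := ((AddCircle.equivIco 1 0) x).2.2
  simpa [rep] using this

lemma coe_rep (x : AddCircle (1:ℝ)) : ((rep x : ℝ) : AddCircle (1:ℝ)) = x :=
  AddCircle.coe_equivIco

lemma rep_coe {a : ℝ} (h0 : 0 ≤ a) (h1 : a < 1) : rep (a : AddCircle (1:ℝ)) = a := by
  have h := AddCircle.coe_equivIco_mk_apply (1:ℝ) a
  have h2 : rep (a : AddCircle (1:ℝ)) = Int.fract (a / 1) * 1 := h
  rw [h2, div_one, mul_one, Int.fract_eq_self.2 ⟨h0, h1⟩]

lemma rep_coe_add {a : ℝ} {y : AddCircle (1:ℝ)} (h0 : 0 ≤ a) (h1 : a + rep y < 1) :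
    rep ((a : AddCircle (1:ℝ)) + y) = a + rep y := by
  have h : (a : AddCircle (1:ℝ)) + y = ((a + rep y : ℝ) : AddCircle (1:ℝ)) := by
    rw [AddCircle.coe_add, coe_rep]
  rw [h, rep_coe (add_nonneg h0 (rep_nonneg y)) h1]

lemma rep_mem_of_sub {x : T2} {a b s : ℝ} (ha : 0 ≤ a) (ha' : a + s ≤ 1) (hb : 0 ≤ b)
    (hb' : b + s ≤ 1) (hx : rep (x - tv a b).1 < s ∧ rep (x - tv a b).2 < s) :
    a ≤ rep x.1 ∧ rep x.1 < a + s ∧ b ≤ rep x.2 ∧ rep x.2 < b + s := by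
  have e1 : x.1 = (a : AddCircle (1:ℝ)) + (x - tv a b).1 := by simp [tv]
  have e2 : x.2 = (b : AddCircle (1:ℝ)) + (x - tv a b).2 := by simp [tv]
  have n1 := rep_nonneg (x - tv a b).1
  have n2 := rep_nonneg (x - tv a b).2
  rw [e1, e2, rep_coe_add ha (by linarith [hx.1]), rep_coe_add hb (by linarith [hx.2])]
  refine ⟨by linarith, by linarith [hx.1], by linarith, by linarith [hx.2]⟩

/-! ### Stabilization of the maps -/

/-- `U_{n+1}` is no longer modified off the top level and the remainder square of its tower,
whose union is `[1 - 2s, 1) × [0, s)` with `s = 2^{-(n+1)}`. -/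
lemma chaconU_stable (n : ℕ) (x : T2)
    (hx : rep x.1 < 1 - 2 * (1 / 2 ^ (n + 1)) ∨ 1 / 2 ^ (n + 1) ≤ rep x.2) (k : ℕ) :
    chaconU (n + 1 + k) x = chaconU (n + 1) x := by
  induction k with
  | zero => rfl
  | succ k ih =>
    rw [← ih]
    have e : n + 1 + (k + 1) = (n + k) + 2 := by ring
    have e' : n + 1 + k = (n + k) + 1 := by ring
    rw [e, e']
    have hs : (4:ℝ) * (1 / 2 ^ (n + k + 2)) ≤ 2 * (1 / 2 ^ (n + 1)) := by
      have h1 : (1:ℝ) / 2 ^ (n + k + 2) = (1 / 2 ^ (n + 1)) * (1 / 2) * (1 / 2 ^ k) := by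
        rw [show n + k + 2 = (n + 1) + 1 + k by ring, pow_add, pow_add]; field_simp
      have h2 : (1:ℝ) / 2 ^ k ≤ 1 := by
        rw [div_le_one (by positivity)]; exact one_le_pow₀ (by norm_num)
      have h3 : (0:ℝ) < 1 / 2 ^ (n + 1) := by positivity
      rw [h1]; nlinarith
    have hp : (0:ℝ) < 1 / 2 ^ (n + k + 2) := by positivity
    rw [chaconU]
    dsimp only
    generalize (1:ℝ) / 2 ^ (n + k + 2) = s at *
    generalize (1:ℝ) / 2 ^ (n + 1) = t at *
    rw [if_neg, if_neg, if_neg, if_neg, if_neg, if_neg, if_neg] <;>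
    · rintro ⟨h1, h2, h3, h4⟩
      rcases hx with hx | hx <;> linarith

/-! ### Masses of translated shapes -/

/-- The mass of `A` in the translate `w + S` of the shape `S`. -/
def mass (A S : Set T2) (w : T2) : ℝ≥0∞ := volume (A ∩ {x | x - w ∈ S})

/-- The translate `w + S` of the shape `S`. -/
def shift (w : T2) (S : Set T2) : Set T2 := {x | x - w ∈ S}

lemma mass_shift (A S : Set T2) (v w : T2) : mass A (shift v S) w = mass A S (w + v) := by
  simp only [mass, shift, mem_ofPred_eq, sub_sub]

/-- If `A` is invariant and `U` is the translation by `v` on `w + S`, then `A` has the same mass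
in `w + S` and in `w + v + S`. -/
lemma mass_add {U : T2 → T2} {A : Set T2} (hA : volume ((U ⁻¹' A) ∆ A) = 0) (S : Set T2)
    (w v : T2) (h : ∀ᵐ x ∂(volume : Measure T2), x - w ∈ S → U x = x + v) :
    mass A S (w + v) = mass A S w := by
  have hae : U ⁻¹' A =ᵐ[volume] A := measure_symmDiff_eq_zero_iff.1 hA
  rw [mass, mass, ← measure_preimage_add volume v]
  apply measure_congr
  filter_upwards [h, hae.mem_iff] with x hx hx2
  have e : v + x - (w + v) = x - w := by abel
  apply propext
  change (v + x ∈ A ∧ v + x - (w + v) ∈ S) ↔ (x ∈ A ∧ x - w ∈ S)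
  rw [e, add_comm v x]
  constructor
  · rintro ⟨h1, h2⟩
    refine ⟨hx2.1 ?_, h2⟩
    change U x ∈ A
    rwa [hx h2]
  · rintro ⟨h1, h2⟩
    refine ⟨?_, h2⟩
    rw [← hx h2]
    exact hx2.2 h1

/-- A shape that fits into the square `[0,s)²`. -/
def Fits (s : ℝ) (S : Set T2) : Prop := ∀ y ∈ S, rep y.1 < s ∧ rep y.2 < s

lemma Fits.shift {s : ℝ} {S : Set T2} (hS : Fits s S) {c d : ℝ} (hc : 0 ≤ c) (hcs : c ≤ s)
    (hd : 0 ≤ d) (hds : d ≤ s) (hs : 2 * s ≤ 1) : Fits (2 * s) (shift (tv c d) S) := by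
  intro y hy
  have := rep_mem_of_sub hc (by linarith) hd (by linarith) (hS _ hy)
  constructor <;> linarith

/-- One step of the tower: a level `[a,a+s) × [b,b+s)` of `U_{n+1}` other than its top level and
the remainder is translated by `U` as it is by `U_{n+1}`. -/
lemma mass_step {U : T2 → T2}
    (hlim : ∀ᵐ x ∂(volume : Measure T2), ∃ N : ℕ, ∀ n, N ≤ n → chaconU n x = U x)
    {A : Set T2} (hA : volume ((U ⁻¹' A) ∆ A) = 0) (n : ℕ) {s : ℝ} (hs : s = 1 / 2 ^ (n + 1))
    {S : Set T2} (hS : Fits s S) {a b c d : ℝ} (a' b' : ℝ)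
    (ha : 0 ≤ a) (ha' : a + s ≤ 1) (hb : 0 ≤ b) (hb' : b + s ≤ 1)
    (hout : a + s ≤ 1 - 2 * s ∨ s ≤ b)
    (hU : ∀ x : T2, a ≤ rep x.1 → rep x.1 < a + s → b ≤ rep x.2 → rep x.2 < b + s →
      chaconU (n + 1) x = x + tv c d)
    (hac : a + c = a') (hbd : b + d = b') :
    mass A S (tv a b) = mass A S (tv a' b') := by
  rw [← hac, ← hbd, ← tv_add]
  symm
  apply mass_add hA
  filter_upwards [hlim] with x hx hxS
  obtain ⟨N, hN⟩ := hx
  obtain ⟨h1, h2, h3, h4⟩ := rep_mem_of_sub ha ha' hb hb' (hS _ hxS)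
  rw [← hN (n + 1 + N) (by omega), chaconU_stable, hU x h1 h2 h3 h4]
  rw [← hs]
  rcases hout with h | h
  · left; linarith
  · right; linarith

/-- Every square of side `2^{-(n+1)}` of the dyadic grid except the remainder
`[1 - s, 1) × [0, s)` carries the same mass of an invariant set as the base
`[0, s) × [1 - s, 1)` of the tower; more generally this holds for congruent pieces of the
squares, which is what makes the induction on `n` work. -/
lemma mass_eq {U : T2 → T2}
    (hlim : ∀ᵐ x ∂(volume : Measure T2), ∃ N : ℕ, ∀ n, N ≤ n → chaconU n x = U x)
    {A : Set T2} (hA : volume ((U ⁻¹' A) ∆ A) = 0) (n : ℕ) :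
    ∀ s : ℝ, s = 1 / 2 ^ (n + 1) → ∀ S : Set T2, Fits s S → ∀ i j : ℕ, i < 2 ^ (n + 1) →
      j < 2 ^ (n + 1) → ¬ (i + 1 = 2 ^ (n + 1) ∧ j = 0) →
      mass A S (tv (i * s) (j * s)) = mass A S (tv 0 (1 - s)) := by
  induction n with
  | zero =>
    intro s hs S hS i j hi hj hij
    have hs' : s = 1 / 2 := by rw [hs]; norm_num
    have e1 : mass A S (tv 0 (1 / 2)) = mass A S (tv (1 / 2) (1 / 2)) := by
      refine mass_step hlim hA 0 hs hS (c := 1 / 2) (d := 0) _ _ 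
        (by norm_num) (by linarith) (by norm_num) (by linarith) (by right; linarith) ?_
        (by norm_num) (by norm_num)
      intro x h1 h2 h3 h4
      have e : chaconU 1 x = x + tv (1 / 2) 0 := by
        rw [chaconU]
        dsimp only
        rw [if_pos ⟨h1, by linarith, by linarith, by linarith⟩]
      simpa using e
    have e2 : mass A S (tv (1 / 2) (1 / 2)) = mass A S (tv 0 0) := by
      refine mass_step hlim hA 0 hs hS (c := -(1 / 2)) (d := -(1 / 2)) _ _
        (by norm_num) (by linarith) (by norm_num) (by linarith) (by right; linarith) ?_
        (by norm_num) (by norm_num)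
      intro x h1 h2 h3 h4
      have e : chaconU 1 x = x + tv (-(1 / 2)) (-(1 / 2)) := by
        rw [chaconU]
        dsimp only
        rw [if_neg, if_pos ⟨by linarith, by linarith, by linarith, by linarith⟩]
        rintro ⟨-, h, -⟩
        linarith
      simpa using e
    have e0 : mass A S (tv 0 (1 - s)) = mass A S (tv 0 (1 / 2)) := by
      rw [hs']; norm_num
    rw [e0, hs']
    norm_num at hi hj hij
    interval_cases i <;> interval_cases j
    · simpa using (e1.trans e2).symm
    · simp
    · simp at hij
    · simpa using e1.symm
  | succ n ih =>
    intro s hs S hS i j hi hj hij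
    have hp : (0:ℝ) < s := by rw [hs]; positivity
    have h2s : 2 * s = 1 / 2 ^ (n + 1) := by rw [hs, pow_succ 2 (n + 1)]; field_simp
    have h2s1 : 2 * s * 2 ^ (n + 1) = 1 := by rw [h2s]; field_simp
    have h4s : 4 * s ≤ 1 := by
      have : (1:ℝ) ≤ 2 ^ n := one_le_pow₀ (by norm_num)
      rw [pow_succ] at h2s1
      nlinarith
    -- the four columns obtained by cutting the tower of `U_{n+1}`
    have col : ∀ c d : ℝ, 0 ≤ c → c ≤ s → 0 ≤ d → d ≤ s → ∀ i j : ℕ, i < 2 ^ (n + 1) →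
        j < 2 ^ (n + 1) → ¬ (i + 1 = 2 ^ (n + 1) ∧ j = 0) →
        mass A S (tv (i * (2 * s) + c) (j * (2 * s) + d)) =
          mass A S (tv c (1 - 2 * s + d)) := by
      intro c d hc hcs hd hds i j hi hj hij
      have := ih (2 * s) h2s _ (hS.shift hc hcs hd hds (by linarith)) i j hi hj hij
      rwa [mass_shift, mass_shift, tv_add, tv_add, zero_add] at this
    have hpow : 2 ≤ 2 ^ (n + 1) := by
      rw [pow_succ]; have := Nat.one_le_two_pow (n := n); omega
    -- `col` for the top level `[1 - 4s, 1 - 2s) × [0, 2s)` of that tower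
    have top : ∀ c d : ℝ, 0 ≤ c → c ≤ s → 0 ≤ d → d ≤ s →
        mass A S (tv (1 - 4 * s + c) d) = mass A S (tv c (1 - 2 * s + d)) := by
      intro c d hc hcs hd hds
      have := col c d hc hcs hd hds (2 ^ (n + 1) - 2) 0 (by omega) (by omega) (by omega)
      rw [← this]
      push_cast [Nat.cast_sub hpow]
      congr 2 <;> linarith
    have tTL := top 0 s le_rfl hp.le hp.le le_rfl
    have tTR := top s s hp.le le_rfl hp.le le_rfl
    have tBL := top 0 0 le_rfl hp.le le_rfl hp.le
    have tBR := top s 0 hp.le le_rfl le_rfl hp.le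
    clear top
    -- the moves of the top level and of the remainder that glue the columns together
    have s1 : mass A S (tv (1 - 4 * s + 0) s) = mass A S (tv s (1 - 2 * s + s)) := by
      refine mass_step hlim hA (n + 1) hs hS (c := 5 * s - 1) (d := 1 - 2 * s) _ _
        (by linarith) (by linarith) (by linarith) (by linarith) ?_ ?_ (by ring) (by ring)
      · right; linarith
      intro x h1 h2 h3 h4
      rw [chaconU, ← hs]
      dsimp only
      rw [if_pos (by refine ⟨?_, ?_, ?_, ?_⟩ <;> linarith)]
    have s2 : mass A S (tv (1 - 4 * s + s) s) = mass A S (tv (1 - 2 * s) s) := by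
      refine mass_step hlim hA (n + 1) hs hS (c := s) (d := 0) _ _
        (by linarith) (by linarith) (by linarith) (by linarith) ?_ ?_ (by ring) (by ring)
      · right; linarith
      intro x h1 h2 h3 h4
      rw [chaconU, ← hs]
      dsimp only
      rw [if_neg (by rintro ⟨_, _, _, _⟩; linarith),
        if_pos (by refine ⟨?_, ?_, ?_, ?_⟩ <;> linarith)]
    have s3 : mass A S (tv (1 - 4 * s + 0) 0) = mass A S (tv (1 - s) s) := by
      refine mass_step hlim hA (n + 1) hs hS (c := 3 * s) (d := s) _ _
        (by linarith) (by linarith) (by linarith) (by linarith) ?_ ?_ (by ring) (by ring)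
      · left; linarith
      intro x h1 h2 h3 h4
      rw [chaconU, ← hs]
      dsimp only
      rw [if_neg (by rintro ⟨_, _, _, _⟩; linarith), if_neg (by rintro ⟨_, _, _, _⟩; linarith),
        if_pos (by refine ⟨?_, ?_, ?_, ?_⟩ <;> linarith)]
    have s4 : mass A S (tv (1 - 4 * s + s) 0) = mass A S (tv (1 - 2 * s) 0) := by
      refine mass_step hlim hA (n + 1) hs hS (c := s) (d := 0) _ _
        (by linarith) (by linarith) (by linarith) (by linarith) ?_ ?_ (by ring) (by ring)
      · left; linarith
      intro x h1 h2 h3 h4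
      rw [chaconU, ← hs]
      dsimp only
      rw [if_neg (by rintro ⟨_, _, _, _⟩; linarith), if_neg (by rintro ⟨_, _, _, _⟩; linarith),
        if_neg (by rintro ⟨_, _, _, _⟩; linarith),
        if_pos (by refine ⟨?_, ?_, ?_, ?_⟩ <;> linarith)]
    have s5 : ∀ a : ℝ, 1 - 2 * s ≤ a → a ≤ 1 - s →
        mass A S (tv a s) = mass A S (tv (a + (2 * s - 1)) (1 - 2 * s + 0)) := by
      intro a ha ha'
      refine mass_step hlim hA (n + 1) hs hS (c := 2 * s - 1) (d := 1 - 3 * s) _ _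
        (by linarith) (by linarith) (by linarith) (by linarith) ?_ ?_ (by ring) (by ring)
      · right; linarith
      intro x h1 h2 h3 h4
      rw [chaconU, ← hs]
      dsimp only
      rw [if_neg (by rintro ⟨_, _, _, _⟩; linarith), if_neg (by rintro ⟨_, _, _, _⟩; linarith),
        if_neg (by rintro ⟨_, _, _, _⟩; linarith), if_neg (by rintro ⟨_, _, _, _⟩; linarith),
        if_pos (by refine ⟨?_, ?_, ?_, ?_⟩ <;> linarith)]
    have s5a := s5 (1 - 2 * s) le_rfl (by linarith)
    have s5b := s5 (1 - s) (by linarith) le_rfl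
    rw [show 1 - 2 * s + (2 * s - 1) = 0 by ring] at s5a
    rw [show 1 - s + (2 * s - 1) = s by ring] at s5b
    have base : mass A S (tv 0 (1 - s)) = mass A S (tv 0 (1 - 2 * s + s)) := by
      congr 2; ring
    -- every column carries the mass of the base
    have cTL : mass A S (tv 0 (1 - 2 * s + s)) = mass A S (tv 0 (1 - s)) := base.symm
    have cTR : mass A S (tv s (1 - 2 * s + s)) = mass A S (tv 0 (1 - s)) :=
      s1.symm.trans (tTL.trans cTL)
    have rTL : mass A S (tv (1 - 2 * s) s) = mass A S (tv 0 (1 - s)) :=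
      s2.symm.trans (tTR.trans cTR)
    have cBL : mass A S (tv 0 (1 - 2 * s + 0)) = mass A S (tv 0 (1 - s)) :=
      s5a.symm.trans rTL
    have rTR : mass A S (tv (1 - s) s) = mass A S (tv 0 (1 - s)) :=
      s3.symm.trans (tBL.trans cBL)
    have cBR : mass A S (tv s (1 - 2 * s + 0)) = mass A S (tv 0 (1 - s)) :=
      s5b.symm.trans rTR
    have rBL : mass A S (tv (1 - 2 * s) 0) = mass A S (tv 0 (1 - s)) :=
      s4.symm.trans (tBR.trans cBR)
    have hp2 : 2 ^ (n + 1 + 1) = 2 * 2 ^ (n + 1) := by rw [pow_succ]; ring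
    rw [hp2] at hi hj hij
    obtain ⟨i', e, he, rfl⟩ : ∃ i' e, e < 2 ∧ i = 2 * i' + e := ⟨i / 2, i % 2, by omega, by omega⟩
    obtain ⟨j', f, hf, rfl⟩ : ∃ j' f, f < 2 ∧ j = 2 * j' + f := ⟨j / 2, j % 2, by omega, by omega⟩
    have hi' : i' < 2 ^ (n + 1) := by omega
    have hj' : j' < 2 ^ (n + 1) := by omega
    by_cases hR : i' + 1 = 2 ^ (n + 1) ∧ j' = 0
    · obtain ⟨hR1, rfl⟩ := hR
      have hR2 : ((i' : ℝ) + 1) = 2 ^ (n + 1) := by exact_mod_cast hR1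
      have hR3 : 2 * s * ((i' : ℝ) + 1) = 1 := by rw [hR2, h2s1]
      have hcase : (e = 0 ∧ f = 1) ∨ (e = 1 ∧ f = 1) ∨ (e = 0 ∧ f = 0) := by omega
      rcases hcase with ⟨rfl, rfl⟩ | ⟨rfl, rfl⟩ | ⟨rfl, rfl⟩
      · rw [← rTL]; push_cast; congr 2 <;> linarith
      · rw [← rTR]; push_cast; congr 2 <;> linarith
      · rw [← rBL]; push_cast; congr 2 <;> linarith
    · have key : ∀ c d : ℝ, 0 ≤ c → c ≤ s → 0 ≤ d → d ≤ s → (e : ℝ) * s = c → (f : ℝ) * s = d →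
          mass A S (tv ((2 * i' + e : ℕ) * s) ((2 * j' + f : ℕ) * s)) =
          mass A S (tv c (1 - 2 * s + d)) := by
        intro c d hc hcs hd hds hec hfd
        rw [← col c d hc hcs hd hds i' j' hi' hj' hR]
        push_cast
        congr 2 <;> linarith
      interval_cases e <;> interval_cases f
      · rw [key 0 0 le_rfl hp.le le_rfl hp.le (by simp) (by simp), cBL]
      · rw [key 0 s le_rfl hp.le hp.le le_rfl (by simp) (by simp), cTL]
      · rw [key s 0 hp.le le_rfl le_rfl hp.le (by simp) (by simp), cBR]
      · rw [key s s hp.le le_rfl hp.le le_rfl (by simp) (by simp), cTR]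

/-! ### Invariance under dyadic translations -/

/-- Reduction of an index modulo the grid does not change the point of the circle. -/
lemma coe_mod (i n : ℕ) {s : ℝ} (hs : s = 1 / 2 ^ n) :
    (((i % 2 ^ n : ℕ) * s : ℝ) : AddCircle (1:ℝ)) = ((i * s : ℝ) : AddCircle (1:ℝ)) := by
  have h : (i : ℝ) = 2 ^ n * (i / 2 ^ n : ℕ) + (i % 2 ^ n : ℕ) := by
    exact_mod_cast (Nat.div_add_mod i (2 ^ n)).symm
  have h1 : (2:ℝ) ^ n * s = 1 := by rw [hs]; field_simp
  have h2 : (i * s : ℝ) = (i / 2 ^ n : ℕ) • (1:ℝ) + (i % 2 ^ n : ℕ) * s := by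
    rw [h, nsmul_eq_mul]
    linear_combination ((i / 2 ^ n : ℕ) : ℝ) * h1
  rw [h2, AddCircle.coe_add, AddCircle.coe_nsmul, AddCircle.coe_period]
  simp

/-- A point lies in the cell of the grid given by the floors of its scaled coordinates. -/
lemma exists_cell (n : ℕ) {s : ℝ} (hs : s = 1 / 2 ^ n) (x : AddCircle (1:ℝ)) :
    ∃ i : Fin (2 ^ n), rep (x - (((i : ℕ) * s : ℝ) : AddCircle (1:ℝ))) < s := by
  have h1 : (2:ℝ) ^ n * s = 1 := by rw [hs]; field_simp
  have hp : (0:ℝ) < s := by rw [hs]; positivity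
  have hx0 := rep_nonneg x
  have hx1 := rep_lt_one x
  have hf := Nat.floor_le (a := rep x * 2 ^ n) (by positivity)
  have hf' := Nat.lt_floor_add_one (rep x * 2 ^ n)
  refine ⟨⟨⌊rep x * 2 ^ n⌋₊, ?_⟩, ?_⟩
  · rw [Nat.floor_lt (by positivity)]
    push_cast
    have : (0:ℝ) < 2 ^ n := by positivity
    nlinarith
  · dsimp only
    generalize (⌊rep x * 2 ^ n⌋₊ : ℝ) = i at *
    have e : x - ((i * s : ℝ) : AddCircle (1:ℝ)) = ((rep x - i * s : ℝ) : AddCircle (1:ℝ)) := by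
      rw [AddCircle.coe_sub, coe_rep]
    have h3 : i * s ≤ rep x * 2 ^ n * s := by gcongr
    have h4 : rep x * 2 ^ n * s < (i + 1) * s := by gcongr
    have h5 : rep x * 2 ^ n * s = rep x := by rw [mul_assoc, h1, mul_one]
    have h0 : rep x - i * s < s := by linarith
    have hs1 : s ≤ 1 := by
      have : (1:ℝ) ≤ 2 ^ n := one_le_pow₀ (by norm_num)
      nlinarith
    rw [e, rep_coe (by linarith) (by linarith)]
    exact h0

/-- Let `v` be a translation of the grid of side `s`. A set of points `x` at which `A` fails to be
`v`-invariant is null if all `x` and `v + x` stay in `[0, 1 - s) × [0, 1)`, hence away from the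
remainder square: inside one cell, `mass_eq` equates the mass of `A` in the set and in its
translate, and one of the two is zero while the other is the full measure. -/
lemma null_level {U : T2 → T2}
    (hlim : ∀ᵐ x ∂(volume : Measure T2), ∃ N : ℕ, ∀ n, N ≤ n → chaconU n x = U x)
    {A : Set T2} (hA : volume ((U ⁻¹' A) ∆ A) = 0) (n : ℕ) {s : ℝ} (hs : s = 1 / 2 ^ (n + 1))
    (K L : ℕ) {v : T2} (hv : v = tv (K * s) (L * s)) {E : Set T2}
    (hE : (∀ x ∈ E, x ∉ A ∧ v + x ∈ A) ∨ (∀ x ∈ E, x ∈ A ∧ v + x ∉ A))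
    (hE1 : ∀ x ∈ E, rep x.1 < 1 - s) (hE2 : ∀ x ∈ E, rep (v + x).1 < 1 - s) :
    volume E = 0 := by
  have hp : (0:ℝ) < s := by rw [hs]; positivity
  have h1s : (2:ℝ) ^ (n + 1) * s = 1 := by rw [hs]; field_simp
  let S : T2 → Set T2 := fun w => {y | y + w ∈ E ∧ rep y.1 < s ∧ rep y.2 < s}
  have hsub : E ⊆ ⋃ i : Fin (2 ^ (n + 1)), ⋃ j : Fin (2 ^ (n + 1)),
      {x | x - tv ((i : ℕ) * s) ((j : ℕ) * s) ∈ S (tv ((i : ℕ) * s) ((j : ℕ) * s))} := by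
    intro x hx
    obtain ⟨i, hi⟩ := exists_cell (n + 1) hs x.1
    obtain ⟨j, hj⟩ := exists_cell (n + 1) hs x.2
    refine mem_iUnion.2 ⟨i, mem_iUnion.2 ⟨j, ?_⟩⟩
    refine ⟨?_, hi, hj⟩
    rwa [sub_add_cancel]
  refine measure_mono_null hsub (measure_iUnion_null fun i => measure_iUnion_null fun j => ?_)
  set w := tv ((i : ℕ) * s) ((j : ℕ) * s) with hw
  rcases Set.eq_empty_or_nonempty {x | x - w ∈ S w} with h0 | ⟨x, hx⟩
  · rw [h0, measure_empty]
  have hfit : Fits s (S w) := fun y hy => hy.2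
  have hxE : x ∈ E := by
    have := hx.1
    rwa [sub_add_cancel] at this
  have bound : ∀ k : ℕ, k < 2 ^ (n + 1) → (k : ℝ) * s + s ≤ 1 := by
    intro k hk
    have : (k : ℝ) + 1 ≤ 2 ^ (n + 1) := by exact_mod_cast hk
    nlinarith
  have nonR : ∀ (z : T2) (a b : ℕ), a < 2 ^ (n + 1) → b < 2 ^ (n + 1) →
      (z - tv (a * s) (b * s)) ∈ S w → rep z.1 < 1 - s →
      mass A (S w) (tv (a * s) (b * s)) = mass A (S w) (tv 0 (1 - s)) := by
    intro z a b ha hb hz hz1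
    refine mass_eq hlim hA n s hs _ hfit a b ha hb ?_
    rintro ⟨h, -⟩
    have h' : (a : ℝ) + 1 = 2 ^ (n + 1) := by exact_mod_cast h
    have := rep_mem_of_sub (by positivity) (bound a ha) (by positivity) (bound b hb) hz.2
    nlinarith [this.1]
  have m1 := nonR x i j i.2 j.2 hx (hE1 x hxE)
  have hwv : w + v = tv (((i + K) % 2 ^ (n + 1) : ℕ) * s) (((j + L) % 2 ^ (n + 1) : ℕ) * s) := by
    rw [hw, hv, tv_add]
    simp only [tv]
    rw [coe_mod _ _ hs, coe_mod _ _ hs]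
    push_cast
    rw [add_mul, add_mul]
  have m2 : mass A (S w) (w + v) = mass A (S w) (tv 0 (1 - s)) := by
    rw [hwv]
    refine nonR (v + x) _ _ (Nat.mod_lt _ (by positivity)) (Nat.mod_lt _ (by positivity)) ?_
      (hE2 x hxE)
    rw [← hwv, show v + x - (w + v) = x - w by abel]
    exact hx
  have m3 : mass A (S w) (w + v) = mass A (S w) w := m2.trans m1.symm
  have mem : ∀ y, y - w ∈ S w → y ∈ E := by
    intro y hy
    have := hy.1
    rwa [sub_add_cancel] at this
  have mem' : ∀ y, y - (w + v) ∈ S w → y - v ∈ E := by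
    intro y hy
    have := hy.1
    rwa [show y - (w + v) + w = y - v by abel] at this
  rcases hE with hE | hE
  · have z : mass A (S w) w = 0 := by
      rw [mass, show A ∩ {x | x - w ∈ S w} = ∅ from ?_, measure_empty]
      ext y
      simp only [mem_inter_iff, mem_ofPred_eq, mem_empty_iff_false, iff_false, not_and]
      intro h1 h2
      exact (hE y (mem y h2)).1 h1
    rw [z, mass, inter_eq_right.2, ← measure_preimage_add volume v] at m3
    · rw [← m3]
      congr 1
      ext y
      change _ ↔ v + y - (w + v) ∈ S w
      rw [show v + y - (w + v) = y - w by abel]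
      rfl
    · intro y hy
      have := (hE _ (mem' y hy)).2
      rwa [add_sub_cancel] at this
  · have z : mass A (S w) (w + v) = 0 := by
      rw [mass, show A ∩ {x | x - (w + v) ∈ S w} = ∅ from ?_, measure_empty]
      ext y
      simp only [mem_inter_iff, mem_ofPred_eq, mem_empty_iff_false, iff_false, not_and]
      intro h1 h2
      have := (hE _ (mem' y h2)).2
      rw [add_sub_cancel] at this
      exact this h1
    rw [z, mass, inter_eq_right.2] at m3
    · exact m3.symm
    · intro y hy
      exact (hE y (mem y hy)).1

/-- The restriction in `null_level` to points away from the remainder square is harmless: each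
point and its translate eventually leave the shrinking remainder squares. -/
lemma null_dyadic {U : T2 → T2}
    (hlim : ∀ᵐ x ∂(volume : Measure T2), ∃ N : ℕ, ∀ n, N ≤ n → chaconU n x = U x)
    {A : Set T2} (hA : volume ((U ⁻¹' A) ∆ A) = 0) (m k l : ℕ) {v : T2}
    (hv : v = tv (k / 2 ^ m) (l / 2 ^ m)) {E : Set T2}
    (hE : (∀ x ∈ E, x ∉ A ∧ v + x ∈ A) ∨ (∀ x ∈ E, x ∈ A ∧ v + x ∉ A)) :
    volume E = 0 := by
  have hsub : E ⊆ ⋃ n : ℕ, {x | x ∈ E ∧ rep x.1 < 1 - 1 / 2 ^ (m + n + 1) ∧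
      rep (v + x).1 < 1 - 1 / 2 ^ (m + n + 1)} := by
    intro x hx
    have h1 := rep_lt_one x.1
    have h2 := rep_lt_one (v + x).1
    obtain ⟨n, hn⟩ := exists_pow_lt_of_lt_one (x := min (1 - rep x.1) (1 - rep (v + x).1))
      (lt_min (by linarith) (by linarith)) (y := (1 / 2 : ℝ)) (by norm_num)
    have hle : (1:ℝ) / 2 ^ (m + n + 1) ≤ (1 / 2) ^ n := by
      rw [div_pow, one_pow]
      exact one_div_le_one_div_of_le (by positivity)
        (pow_le_pow_right₀ (by norm_num) (by omega))
    have h3 := hle.trans_lt (hn.trans_le (min_le_left _ _))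
    have h4 := hle.trans_lt (hn.trans_le (min_le_right _ _))
    exact mem_iUnion.2 ⟨n, hx, by linarith, by linarith⟩
  refine measure_mono_null hsub (measure_iUnion_null fun n => ?_)
  refine null_level hlim hA (m + n) rfl (k * 2 ^ (n + 1)) (l * 2 ^ (n + 1)) (v := v) ?_ ?_
    (fun x hx => hx.2.1) (fun x hx => hx.2.2)
  · rw [hv]
    congr 1 <;>
    · push_cast
      rw [show m + n + 1 = m + (n + 1) by ring, pow_add 2 m (n + 1)]
      field_simp
      try ring
  · exact hE.imp (fun h x hx => h x hx.1) (fun h x hx => h x hx.1)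

lemma preimage_dyadic {U : T2 → T2}
    (hlim : ∀ᵐ x ∂(volume : Measure T2), ∃ N : ℕ, ∀ n, N ≤ n → chaconU n x = U x)
    {A : Set T2} (hA : volume ((U ⁻¹' A) ∆ A) = 0) (m k l : ℕ) :
    (tv (k / 2 ^ m) (l / 2 ^ m) +ᵥ ·) ⁻¹' A =ᵐ[volume] A := by
  set v := tv (k / 2 ^ m) (l / 2 ^ m) with hv
  refine measure_symmDiff_eq_zero_iff.1 (measure_union_null ?_ ?_)
  · exact null_dyadic hlim hA m k l hv (Or.inl fun x hx => ⟨hx.2, hx.1⟩)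
  · exact null_dyadic hlim hA m k l hv (Or.inr fun x hx => ⟨hx.1, hx.2⟩)

lemma tendsto_dyadic (x : AddCircle (1:ℝ)) :
    Tendsto (fun m : ℕ => (((⌊rep x * 2 ^ m⌋₊ : ℝ) / 2 ^ m : ℝ) : AddCircle (1:ℝ))) atTop
      (nhds x) := by
  have h : Tendsto (fun m : ℕ => (⌊rep x * 2 ^ m⌋₊ : ℝ) / 2 ^ m) atTop (nhds (rep x)) :=
    (tendsto_nat_floor_mul_div_atTop (rep_nonneg x)).comp
      (tendsto_pow_atTop_atTop_of_one_lt (by norm_num : (1:ℝ) < 2))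
  have hc : Continuous (fun a : ℝ => (a : AddCircle (1:ℝ))) := AddCircle.continuous_mk' 1
  have := (hc.tendsto (rep x)).comp h
  rwa [coe_rep] at this

/-- The a.e. limit `U` of the Chacon-type maps is ergodic: every Borel set `A` with
`U⁻¹(A) = A` up to null sets has measure `0` or `1`. -/
theorem chacon_ergodic (U : T2 → T2)
    (hU : IsAutomorphism U)
    (hlim : ∀ᵐ x ∂(volume : Measure T2), ∃ N : ℕ, ∀ n, N ≤ n → chaconU n x = U x) :
    ∀ A : Set T2, MeasurableSet A → volume ((U ⁻¹' A) ∆ A) = 0 →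
      volume A = 0 ∨ volume A = 1 := by
  intro A hAm hA
  have hd : Dense {g : T2 | (g +ᵥ ·) ⁻¹' A =ᵐ[volume] A} := by
    intro x
    refine mem_closure_of_tendsto ((tendsto_dyadic x.1).prodMk_nhds (tendsto_dyadic x.2))
      (Eventually.of_forall fun m => ?_)
    exact preimage_dyadic hlim hA m _ _
  have : ErgodicVAdd T2 T2 volume := ergodic_vadd_self
  have hc := aeconst_of_dense_setOfPred_preimage_vadd_ae hAm.nullMeasurableSet hd
  have huniv : volume (univ : Set T2) = 1 := by
    rw [← univ_prod_univ, Measure.volume_eq_prod, Measure.prod_prod, AddCircle.measure_univ]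
    simp
  rcases eventuallyConst_set'.1 hc with h | h
  · left
    rw [measure_congr h, measure_empty]
  · right
    rw [measure_congr h, huniv]

end
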